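/- arXiv:1205.6256 — 4 statements merged into one kernel-verified Lean document; each statement's English description precedes it below -/
import Mathlib

section
/- Let L be a finite upper locally distributive lattice, let a ⋖ b be a cover in L and let m = 𝔪(a,b). Then for every chain of covers a = x₁ ⋖ x₂ ⋖ ⋯ ⋖ x_k = m in L there exists a chain of covers b = y₁ ⋖ y₂ ⋖ ⋯ ⋖ y_k = m⁺ in L such that x_i ⋖ y_i for every 1 ≤ i ≤ k, and moreover 𝔪(x_i, y_i) = m for every 1 ≤ i ≤ k. -/
open Classical

section CFGdefs

variable {V : Type*}

/-- Out-degree of a vertex in a directed multigraph with edge multiplicities `E`. -/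
noncomputable def outDeg (E : V → V → ℕ) (v : V) : ℕ := ∑ᶠ u, E v u

/-- A vertex is a sink if all its outgoing edges are loops. -/
def IsSink (E : V → V → ℕ) (v : V) : Prop := outDeg E v = E v v

/-- A vertex is firable in configuration `c`. -/
def Firable (E : V → V → ℕ) (c : V → ℕ) (v : V) : Prop :=
  ¬ IsSink E v ∧ outDeg E v ≤ c v

/-- The result of firing vertex `v` in configuration `c`. -/
noncomputable def fire (E : V → V → ℕ) (c : V → ℕ) (v : V) : V → ℕ :=
  fun u => if u = v then c v - outDeg E v + E v v else c u + E v u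

/-- The configuration obtained by firing a list of vertices in order. -/
noncomputable def fireList (E : V → V → ℕ) : (V → ℕ) → List V → (V → ℕ)
  | c, [] => c
  | c, v :: l => fireList E (fire E c v) l

/-- A list of vertices is a valid firing sequence from `c`. -/
def ValidSeq (E : V → V → ℕ) : (V → ℕ) → List V → Prop
  | _, [] => True
  | c, v :: l => Firable E c v ∧ ValidSeq E (fire E c v) l

/-- `c'` is reachable from `c` by a finite sequence of firings. -/
def Reaches (E : V → V → ℕ) (c c' : V → ℕ) : Prop :=
  ∃ l : List V, ValidSeq E c l ∧ fireList E c l = c'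

/-- A configuration with no firable vertex. -/
def FixedPt (E : V → V → ℕ) (c : V → ℕ) : Prop := ∀ v, ¬ Firable E c v

/-- The chip firing game `CFG(G,O)` reaches a unique fixed point. -/
def ReachesUFP (E : V → V → ℕ) (O : V → ℕ) : Prop :=
  ∃ fp : V → ℕ, Reaches E O fp ∧ FixedPt E fp ∧ ∀ c, Reaches E O c → Reaches E c fp

/-- The game is simple: in every firing sequence from `O` to the fixed point,
each vertex fires at most once. -/
def SimpleCFG (E : V → V → ℕ) (O : V → ℕ) : Prop :=
  ∀ l : List V, ValidSeq E O l → FixedPt E (fireList E O l) → l.Nodup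

/-- Single firing step from `c` to `c'` by firing vertex `v`. -/
def FireStep (E : V → V → ℕ) (c : V → ℕ) (v : V) (c' : V → ℕ) : Prop :=
  Firable E c v ∧ fire E c v = c'

/-- The partial order `L` is order-isomorphic to the configuration space of
`CFG(G,O)` ordered by reachability. -/
def Generates (E : V → V → ℕ) (O : V → ℕ) (L : Type*) [PartialOrder L] : Prop :=
  ∃ f : L ≃ {c : V → ℕ // Reaches E O c},
    ∀ a b : L, a ≤ b ↔ Reaches E (f a).val (f b).val

/-- The support graph is connected (as an undirected graph). -/
def ConnectedG (E : V → V → ℕ) : Prop :=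
  ∀ u v : V, Relation.ReflTransGen (fun a b => 0 < E a b ∨ 0 < E b a) u v

/-- The support graph together with its initial data is an Abelian Sandpile Model. -/
def IsASM (E : V → V → ℕ) : Prop :=
  ConnectedG E ∧ ∃ s : V, IsSink E s ∧ (∀ v, IsSink E v → v = s) ∧
    ∀ v₁ v₂ : V, v₁ ≠ v₂ → v₁ ≠ s → v₂ ≠ s → E v₁ v₂ = E v₂ v₁

/-- The directed multigraph has no directed cycle. -/
def AcyclicG (E : V → V → ℕ) : Prop :=
  ∀ v : V, ¬ Relation.TransGen (fun a b => 0 < E a b) v v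

end CFGdefs

/-- `L` is generated by some chip firing game reaching a unique fixed point. -/
def MemLCFG (L : Type*) [PartialOrder L] : Prop :=
  ∃ (V : Type) (_ : Finite V) (E : V → V → ℕ) (O : V → ℕ),
    ReachesUFP E O ∧ Generates E O L

/-- `L` is generated by some Abelian Sandpile Model reaching a unique fixed point. -/
def MemLASM (L : Type*) [PartialOrder L] : Prop :=
  ∃ (V : Type) (_ : Finite V) (E : V → V → ℕ) (O : V → ℕ),
    IsASM E ∧ ReachesUFP E O ∧ Generates E O L

section Latticedefs

variable {L : Type*} [Lattice L]

/-- `m` is meet-irreducible: it has exactly one upper cover. -/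
def MeetIrred (m : L) : Prop := ∃! y, m ⋖ y

/-- `j` is join-irreducible: it has exactly one lower cover. -/
def JoinIrred (j : L) : Prop := ∃! y, y ⋖ j

/-- The set `M_x \ M_y` of meet-irreducibles above `x` but not above `y`. -/
def MsetDiff (x y : L) : Set L := {m | MeetIrred m ∧ x ≤ m ∧ ¬ y ≤ m}

/-- The set `M \ M_a` of meet-irreducibles not above `a`. -/
def MnotAbove (a : L) : Set L := {m | MeetIrred m ∧ ¬ a ≤ m}

/-- `x⁺`: the join of all upper covers of `x`. -/
noncomputable def uplus [Fintype L] [OrderBot L] (x : L) : L :=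
  Finset.univ.sup (fun y => if x ⋖ y then y else ⊥)

/-- `L` is upper locally distributive: for every `x ≠ ⊤` the interval `[x, x⁺]`
is isomorphic to a Boolean lattice (a hypercube). -/
def IsULD (L : Type*) [Lattice L] [Fintype L] [BoundedOrder L] : Prop :=
  ∀ x : L, x ≠ ⊤ → ∃ n : ℕ, Nonempty (↥(Set.Icc x (uplus x)) ≃o Set (Fin n))

/-- `𝔘_m`: the minimal elements of `{x : ∃ y, x ⋖ y and 𝔪(x,y) = m}`. -/
def Uset (m : L) : Set L :=
  {x | Minimal (fun z => ∃ y, z ⋖ y ∧ MsetDiff z y = {m}) x}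

/-- `𝔏_m`: the maximal elements of `{x : a ≰ x for every a ∈ 𝔘_m}`. -/
def Lset (m : L) : Set L :=
  {x | Maximal (fun z => ∀ a ∈ Uset m, ¬ a ≤ z) x}

/-- `(w, e)` is a (non-negative integer) solution of the system `E(m)`. -/
def SolvesE [OrderBot L] (m : L) (w : ℕ) (e : L → ℕ) : Prop :=
  (Uset m = {(⊥ : L)} → 1 ≤ w) ∧
  (Uset m ≠ {(⊥ : L)} →
    (∀ a ∈ Lset m, (∑ᶠ x ∈ MnotAbove a, e x) < w) ∧
    (∀ a ∈ Uset m, w ≤ ∑ᶠ x ∈ MnotAbove a, e x))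

/-- The system `E(m)` has a non-negative integer solution. -/
def HasSolE [OrderBot L] (m : L) : Prop := ∃ w e, SolvesE m w e

/-- The variable `e_{x,m}` occurs in the system `𝔈(m)`. -/
def VarOccurs [OrderBot L] (x m : L) : Prop :=
  MeetIrred m ∧ Uset m ≠ {(⊥ : L)} ∧ ∃ a ∈ Uset m ∪ Lset m, x ∈ MnotAbove a

/-- `(W, Ee)` is a non-negative integer solution of the system `Ω`. -/
def SolvesOmega [OrderBot L] (W : L → ℕ) (Ee : L → L → ℕ) : Prop :=
  (∀ m : L, MeetIrred m → SolvesE m (W m) (fun x => Ee x m)) ∧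
  (∀ m₁ m₂ : L, m₁ ≠ m₂ → VarOccurs m₁ m₂ → VarOccurs m₂ m₁ → Ee m₁ m₂ = Ee m₂ m₁)

/-- The edge relation of the directed graph `𝒢` on the meet-irreducibles. -/
def Gedge (m₁ m₂ : L) : Prop :=
  MeetIrred m₁ ∧ MeetIrred m₂ ∧ ∃ a ∈ Uset m₂, m₁ ∈ MnotAbove a

end Latticedefs

/-- The system `Ω` has a non-negative integer solution. -/
def HasSolOmega (L : Type*) [Lattice L] [OrderBot L] : Prop :=
  ∃ W Ee, SolvesOmega (L := L) W Ee

/-- The directed graph `𝒢` on the meet-irreducibles is acyclic. -/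
def GAcyclic (L : Type*) [Lattice L] : Prop :=
  ∀ m : L, ¬ Relation.TransGen (Gedge (L := L)) m m

section UpperCovers

variable {L : Type*} [Lattice L] [Fintype L] [BoundedOrder L]

/-- Every upper cover of `x` lies below `x⁺`. -/
theorem CovBy.le_uplus {x y : L} (h : x ⋖ y) : y ≤ uplus x := by
  have := Finset.le_sup (f := fun y => if x ⋖ y then y else ⊥) (Finset.mem_univ y)
  simpa [h, uplus] using this

/-- If `m` is meet-irreducible, then `m⁺` is its only upper cover. -/
theorem MeetIrred.eq_uplus {m y : L} (hm : MeetIrred m) (h : m ⋖ y) : y = uplus m := by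
  refine le_antisymm h.le_uplus (Finset.sup_le fun z _ => ?_)
  split_ifs with hz
  · exact (hm.unique hz h).le
  · exact bot_le

/-- A finite upper locally distributive lattice is upper semimodular. -/
theorem IsULD.covBy_sup (hL : IsULD L) {x p q : L} (hp : x ⋖ p) (hq : x ⋖ q) (hpq : p ≠ q) :
    p ⋖ p ⊔ q := by
  obtain ⟨n, ⟨e⟩⟩ := hL x (fun h => not_top_lt (h ▸ hp.lt))
  have hord : (Set.range (OrderEmbedding.subtype (· ∈ Set.Icc x (uplus x)))).OrdConnected := by
    rw [OrderEmbedding.coe_subtype, Subtype.range_coe]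
    exact Set.ordConnected_Icc
  have lift {u v : Set.Icc x (uplus x)} : (u : L) ⋖ v ↔ u ⋖ v :=
    hord.apply_covBy_apply_iff (OrderEmbedding.subtype (· ∈ Set.Icc x (uplus x)))
  let X : Set.Icc x (uplus x) := ⟨x, le_rfl, hp.le.trans hp.le_uplus⟩
  let P : Set.Icc x (uplus x) := ⟨p, hp.le, hp.le_uplus⟩
  let Q : Set.Icc x (uplus x) := ⟨q, hq.le, hq.le_uplus⟩
  have hP : e X ⋖ e P := (apply_covBy_apply_iff e).2 (lift.1 hp)
  have hQ : e X ⋖ e Q := (apply_covBy_apply_iff e).2 (lift.1 hq)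
  have hne : e P ≠ e Q := fun h => hpq (congrArg Subtype.val (e.injective h))
  have hinf : e P ⊓ e Q = e X := by
    refine (hP.eq_or_eq (le_inf hP.le hQ.le) inf_le_left).resolve_right fun h => ?_
    exact (hQ.eq_or_eq hP.le (inf_eq_left.1 h)).elim hP.lt.ne' hne
  have hsup : e P ⋖ e P ⊔ e Q :=
    covBy_sup_of_inf_covBy_right (by rw [hinf]; exact hQ)
  rw [← map_sup, apply_covBy_apply_iff] at hsup
  exact lift.2 hsup

/-- A cover labelled by `m` can be pushed along a cover `x ⋖ x'` with `x' ≤ m`. -/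
theorem IsULD.covBy_sup_of_msetDiff_eq (hL : IsULD L) {x x' y m : L} (hy : x ⋖ y)
    (hm : MsetDiff x y = {m}) (hx' : x ⋖ x') (hle : x' ≤ m) :
    y ⋖ x' ⊔ y ∧ x' ⋖ x' ⊔ y ∧ MsetDiff x' (x' ⊔ y) = {m} := by
  have hmem : m ∈ MsetDiff x y := hm ▸ rfl
  have hne : x' ≠ y := fun h => hmem.2.2 (h ▸ hle)
  refine ⟨sup_comm y x' ▸ hL.covBy_sup hy hx' hne.symm, hL.covBy_sup hx' hy hne, ?_⟩
  refine Set.Subset.antisymm (fun n hn => ?_) ?_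
  · rw [← hm]
    exact ⟨hn.1, hx'.le.trans hn.2.1, fun h => hn.2.2 (sup_le hn.2.1 h)⟩
  · rintro _ rfl
    exact ⟨hmem.1, hle, fun h => hmem.2.2 (le_sup_right.trans h)⟩

end UpperCovers

/-- In a finite ULD lattice, given a cover `a ⋖ b` with `𝔪(a,b) = m`,
every chain of covers from `a` to `m` lifts to a chain of covers from `b` to `m⁺`,
with `x_i ⋖ y_i` and `𝔪(x_i, y_i) = m` throughout. -/
theorem stmt0 {L : Type*} [Lattice L] [Fintype L] [BoundedOrder L]
    (hULD : IsULD L) (a b m : L) (hab : a ⋖ b) (hm : MsetDiff a b = {m})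
    (k : ℕ) (hk : 1 ≤ k) (x : ℕ → L) (hx1 : x 1 = a) (hxk : x k = m)
    (hchain : ∀ i, 1 ≤ i → i < k → x i ⋖ x (i + 1)) :
    ∃ y : ℕ → L, y 1 = b ∧ y k = uplus m ∧
      (∀ i, 1 ≤ i → i < k → y i ⋖ y (i + 1)) ∧
      (∀ i, 1 ≤ i → i ≤ k → x i ⋖ y i ∧ MsetDiff (x i) (y i) = {m}) := by
  have hle : ∀ i, 1 ≤ i → i ≤ k → x i ≤ m := by
    intro i hi hik
    induction hik using Nat.decreasingInduction with
    | self => exact hxk.le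
    | of_succ j hj ih => exact (hchain j hi hj).le.trans (ih (by omega))
  have hmem : m ∈ MsetDiff a b := hm ▸ rfl
  have hcov : ∀ i, 1 ≤ i → i ≤ k → x i ⋖ x i ⊔ b ∧ MsetDiff (x i) (x i ⊔ b) = {m} := by
    intro i hi
    induction i, hi using Nat.le_induction with
    | base => intro _; rw [hx1, sup_eq_right.2 hab.le]; exact ⟨hab, hm⟩
    | succ j hj ih =>
      intro hjk
      obtain ⟨hy, hd⟩ := ih (by omega)
      have hc := hchain j hj hjk
      have := (hULD.covBy_sup_of_msetDiff_eq hy hd hc (hle _ (by omega) hjk)).2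
      rwa [← sup_assoc, sup_eq_left.2 hc.le] at this
  refine ⟨fun i => x i ⊔ b, by simp [hx1, hab.le], ?_, fun i hi hik => ?_, hcov⟩
  · have := (hcov k hk le_rfl).1
    rw [hxk] at this
    simpa [hxk] using hmem.1.eq_uplus this
  · obtain ⟨hy, hd⟩ := hcov i hi hik.le
    have hc := hchain i hi hik
    have := (hULD.covBy_sup_of_msetDiff_eq hy hd hc (hle _ (by omega) hik)).1
    rwa [← sup_assoc, sup_eq_left.2 hc.le] at this
end

section
/- Let CFG(G,O) be a simple chip firing game reaching a unique fixed point, so that its configuration space L = CFG(G,O) is a finite ULD lattice, and let 𝒱 be the set of vertices of G fired in any firing sequence from O to the fixed point. Then the map κ : M → 𝒱 defined by κ(m) = ϑ(c,c'), where c ⋖ c' is any cover of configurations with 𝔪(c,c') = m and ϑ(c,c') is the vertex fired to pass from c to c', is well-defined (independent of the chosen cover) and is a bijection from M onto 𝒱. -/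
open Classical

section ChipFiring

variable {V : Type*} {E : V → V → ℕ} {c : V → ℕ}

theorem fireList_append (c : V → ℕ) (l₁ l₂ : List V) :
    fireList E c (l₁ ++ l₂) = fireList E (fireList E c l₁) l₂ := by
  induction l₁ generalizing c with
  | nil => rfl
  | cons v l ih => exact ih _

theorem validSeq_append {l₁ l₂ : List V} :
    ValidSeq E c (l₁ ++ l₂) ↔ ValidSeq E c l₁ ∧ ValidSeq E (fireList E c l₁) l₂ := by
  induction l₁ generalizing c with
  | nil => simp [ValidSeq, fireList]
  | cons v l ih => simp [ValidSeq, fireList, ih, and_assoc]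

theorem Firable.fire_of_ne {v w : V} (hw : Firable E c w) (h : w ≠ v) :
    Firable E (fire E c v) w :=
  ⟨hw.1, by simpa [fire, h] using hw.2.trans (Nat.le_add_right _ _)⟩

theorem fire_comm {v w : V} (hv : Firable E c v) (hw : Firable E c w) (h : w ≠ v) :
    fire E (fire E c v) w = fire E (fire E c w) v := by
  have h₁ := hv.2
  have h₂ := hw.2
  funext u
  by_cases huv : u = v
  · subst huv
    simp only [fire, if_neg h.symm, if_true]
    omega
  · by_cases huw : u = w
    · subst huw
      simp only [fire, if_neg h, if_true]
      omega
    · simp only [fire, if_neg huv, if_neg huw]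
      omega

theorem ValidSeq.erase {v : V} {l : List V} (hv : Firable E c v) (hl : ValidSeq E c l) :
    ValidSeq E (fire E c v) (l.erase v) := by
  induction l generalizing c with
  | nil => trivial
  | cons w l ih =>
    by_cases h : w = v
    · subst h
      simpa using hl.2
    · rw [List.erase_cons_tail (by simpa using h)]
      refine ⟨hl.1.fire_of_ne h, ?_⟩
      rw [fire_comm hv hl.1 h]
      exact ih (hv.fire_of_ne (Ne.symm h)) hl.2

theorem fireList_erase {v : V} {l : List V} (hv : Firable E c v) (hl : ValidSeq E c l)
    (hvl : v ∈ l) : fireList E (fire E c v) (l.erase v) = fireList E c l := by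
  induction l generalizing c with
  | nil => simp at hvl
  | cons w l ih =>
    by_cases h : w = v
    · subst h
      simp [fireList]
    · rw [List.erase_cons_tail (by simpa using h)]
      simp only [fireList]
      rw [fire_comm hv hl.1 h]
      refine ih (hv.fire_of_ne (Ne.symm h)) hl.2 ?_
      simpa [Ne.symm h] using hvl

/-- After a valid sequence `l₁`, what remains of a valid sequence `l₂` is still valid. -/
theorem ValidSeq.diff {l₁ l₂ : List V} (h₁ : ValidSeq E c l₁) (h₂ : ValidSeq E c l₂) :
    ValidSeq E (fireList E c l₁) (l₂.diff l₁) := by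
  induction l₁ generalizing c l₂ with
  | nil => simpa [fireList] using h₂
  | cons v l ih =>
    rw [List.diff_cons]
    exact ih h₁.2 (h₂.erase h₁.1)

theorem fireList_diff {l₁ l₂ : List V} (h₁ : ValidSeq E c l₁) (h₂ : ValidSeq E c l₂)
    (h : l₁.Subperm l₂) : fireList E (fireList E c l₁) (l₂.diff l₁) = fireList E c l₂ := by
  induction l₁ generalizing c l₂ with
  | nil => simp [fireList]
  | cons v l ih =>
    have hv : v ∈ l₂ := h.subset (by simp)
    rw [List.diff_cons, ← fireList_erase h₁.1 h₂ hv]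
    refine ih h₁.2 (h₂.erase h₁.1) ?_
    simpa using h.erase v

theorem FixedPt.eq_nil {l : List V} (hc : FixedPt E c) (hl : ValidSeq E c l) : l = [] := by
  cases l with
  | nil => rfl
  | cons v l => exact absurd hl.1 (hc v)

theorem ValidSeq.subperm_of_fixedPt {l₁ l₂ : List V} (h₁ : ValidSeq E c l₁)
    (h₂ : ValidSeq E c l₂) (hfix : FixedPt E (fireList E c l₁)) : l₂.Subperm l₁ := by
  have h : l₂.Subperm (l₁ ++ l₂.diff l₁) := by
    rw [List.subperm_ext_iff]
    intro x _
    rw [List.count_append, List.count_diff]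
    omega
  rwa [hfix.eq_nil (h₁.diff h₂), List.append_nil] at h

variable {O : V → ℕ}

theorem ReachesUFP.exists_extension (hUFP : ReachesUFP E O) {l : List V}
    (hl : ValidSeq E O l) : ∃ s, ValidSeq E (fireList E O l) s ∧
      FixedPt E (fireList E (fireList E O l) s) := by
  obtain ⟨fp, -, hfix, h⟩ := hUFP
  obtain ⟨s, hs, rfl⟩ := h _ ⟨l, hl, rfl⟩
  exact ⟨s, hs, hfix⟩

theorem SimpleCFG.nodup (hUFP : ReachesUFP E O) (hSimple : SimpleCFG E O) {l : List V}
    (hl : ValidSeq E O l) : l.Nodup := by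
  obtain ⟨s, hs, hfix⟩ := hUFP.exists_extension hl
  exact (hSimple (l ++ s) (validSeq_append.2 ⟨hl, hs⟩)
    (by rwa [fireList_append])).of_append_left

theorem ReachesUFP.perm (hUFP : ReachesUFP E O) {l₁ l₂ : List V} (h₁ : ValidSeq E O l₁)
    (h₂ : ValidSeq E O l₂) (h : fireList E O l₁ = fireList E O l₂) : l₁.Perm l₂ := by
  obtain ⟨s, hs, hfix⟩ := hUFP.exists_extension h₁
  have hv₁ := validSeq_append.2 ⟨h₁, hs⟩
  have hv₂ := validSeq_append.2 ⟨h₂, h ▸ hs⟩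
  have hf₁ : FixedPt E (fireList E O (l₁ ++ s)) := by rwa [fireList_append]
  have hf₂ : FixedPt E (fireList E O (l₂ ++ s)) := by rwa [fireList_append, ← h]
  exact (List.perm_append_right_iff s).1
    ((hv₂.subperm_of_fixedPt hv₁ hf₂).antisymm (hv₁.subperm_of_fixedPt hv₂ hf₁))

theorem SimpleCFG.reaches_of_subset (hUFP : ReachesUFP E O) (hSimple : SimpleCFG E O)
    {l₁ l₂ : List V} (h₁ : ValidSeq E O l₁) (h₂ : ValidSeq E O l₂) (h : l₁ ⊆ l₂) :
    Reaches E (fireList E O l₁) (fireList E O l₂) :=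
  ⟨l₂.diff l₁, h₁.diff h₂, fireList_diff h₁ h₂ ((hSimple.nodup hUFP h₁).subperm h)⟩

end ChipFiring

section FeasibleSets

variable {V L : Type*} [Lattice L] [BoundedOrder L]

/-- A representation of `L` by subsets of `V` forming an antimatroid: order is inclusion,
joins are unions, and every strict inclusion can be entered by adding a single element. -/
structure IsAntimatroidRep (S : L → Set V) : Prop where
  le_iff : ∀ a b, a ≤ b ↔ S a ⊆ S b
  bot : S ⊥ = ∅
  sup : ∀ a b, S (a ⊔ b) = S a ∪ S b
  step : ∀ a b, a < b → ∃ v, v ∉ S a ∧ ∃ c, c ≤ b ∧ S c = insert v (S a)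

/-- The join of all elements whose set avoids `v`. -/
noncomputable def largestAvoiding [Fintype L] (S : L → Set V) (v : V) : L :=
  {a | v ∉ S a}.toFinset.sup id

namespace IsAntimatroidRep

variable {S : L → Set V}

theorem eq_of_eq (hS : IsAntimatroidRep S) {a b : L} (h : S a = S b) : a = b :=
  le_antisymm ((hS.le_iff _ _).2 h.subset) ((hS.le_iff _ _).2 h.superset)

theorem covBy (hS : IsAntimatroidRep S) {a c : L} {v : V} (hv : v ∉ S a)
    (hc : S c = insert v (S a)) : a ⋖ c := by
  refine ⟨lt_of_le_not_ge ((hS.le_iff _ _).2 (hc ▸ Set.subset_insert _ _)) fun h =>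
    hv ((hS.le_iff _ _).1 h (hc ▸ Set.mem_insert _ _)), fun d had hdc => ?_⟩
  obtain ⟨w, hw, e, hed, he⟩ := hS.step a d had
  have hwc : w ∈ S c := (hS.le_iff _ _).1 (hed.trans hdc.le) (he ▸ Set.mem_insert _ _)
  rw [hc] at hwc
  obtain rfl := hwc.resolve_right hw
  exact (hed.trans_lt hdc).not_ge ((hS.le_iff _ _).2 (by rw [hc, he]))

theorem exists_insert_of_covBy (hS : IsAntimatroidRep S) {a c : L} (h : a ⋖ c) :
    ∃ v, v ∉ S a ∧ S c = insert v (S a) := by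
  obtain ⟨v, hv, d, hd, hdS⟩ := hS.step a c h.lt
  obtain rfl := (h.eq_or_eq (hS.covBy hv hdS).le hd).resolve_left (hS.covBy hv hdS).ne'
  exact ⟨v, hv, hdS⟩

variable [Fintype L]

theorem notMem_largestAvoiding (hS : IsAntimatroidRep S) (v : V) :
    v ∉ S (largestAvoiding S v) := by
  unfold largestAvoiding
  refine Finset.sup_induction (p := fun a => v ∉ S a) (by simp [hS.bot]) ?_ (by simp)
  intro a ha b hb
  simp [hS.sup, ha, hb]

theorem le_largestAvoiding (hS : IsAntimatroidRep S) {v : V} {a : L} :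
    a ≤ largestAvoiding S v ↔ v ∉ S a := by
  refine ⟨fun h hv => hS.notMem_largestAvoiding v ((hS.le_iff _ _).1 h hv), fun h => ?_⟩
  exact Finset.le_sup (f := id) (by simpa using h)

theorem eq_insert_of_largestAvoiding_covBy (hS : IsAntimatroidRep S) {v : V} {c : L}
    (h : largestAvoiding S v ⋖ c) :
    S c = insert v (S (largestAvoiding S v)) := by
  obtain ⟨w, hw, hc⟩ := hS.exists_insert_of_covBy h
  have hv : v ∈ S c := by
    by_contra hv
    exact h.lt.not_ge (hS.le_largestAvoiding.2 hv)
  have hvw : v = w := (hc ▸ hv).resolve_right (hS.notMem_largestAvoiding v)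
  rw [hc, hvw]

theorem exists_largestAvoiding_covBy (hS : IsAntimatroidRep S) {v : V} (hv : v ∈ S ⊤) :
    ∃ c, largestAvoiding S v ⋖ c := by
  have hlt : largestAvoiding S v < ⊤ :=
    lt_top_iff_ne_top.2 fun h => hS.notMem_largestAvoiding v (h ▸ hv)
  obtain ⟨w, hw, c, -, hc⟩ := hS.step _ _ hlt
  exact ⟨c, hS.covBy hw hc⟩

theorem meetIrred_largestAvoiding (hS : IsAntimatroidRep S) {v : V} (hv : v ∈ S ⊤) :
    MeetIrred (largestAvoiding S v) := by
  obtain ⟨c, hc⟩ := hS.exists_largestAvoiding_covBy hv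
  refine ⟨c, hc, fun d hd => hS.eq_of_eq ?_⟩
  rw [hS.eq_insert_of_largestAvoiding_covBy hc, hS.eq_insert_of_largestAvoiding_covBy hd]

theorem injOn_largestAvoiding (hS : IsAntimatroidRep S) :
    Set.InjOn (largestAvoiding S) (S ⊤) := by
  intro v hv w _ h
  obtain ⟨c, hc⟩ := hS.exists_largestAvoiding_covBy hv
  have hcv := hS.eq_insert_of_largestAvoiding_covBy hc
  have hcw := hS.eq_insert_of_largestAvoiding_covBy (h ▸ hc)
  have hmem : v ∈ S c := hcv ▸ Set.mem_insert _ _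
  rw [hcw, ← h] at hmem
  exact hmem.resolve_right (hS.notMem_largestAvoiding v)

theorem exists_eq_largestAvoiding (hS : IsAntimatroidRep S) {m : L} (hm : MeetIrred m) :
    ∃ v ∈ S ⊤, largestAvoiding S v = m := by
  obtain ⟨c, hc, huniq⟩ := hm
  obtain ⟨v, hv, hcv⟩ := hS.exists_insert_of_covBy hc
  have hvc : v ∈ S c := hcv ▸ Set.mem_insert _ _
  refine ⟨v, (hS.le_iff _ _).1 le_top hvc, ?_⟩
  refine ((hS.le_largestAvoiding.2 hv).eq_of_not_lt fun hlt => ?_).symm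
  obtain ⟨w, hw, d, hd, hdw⟩ := hS.step _ _ hlt
  obtain rfl := huniq d (hS.covBy hw hdw)
  exact hS.le_largestAvoiding.1 hd hvc

theorem largestAvoiding_mem_msetDiff (hS : IsAntimatroidRep S) {a c : L} {v : V} (hv : v ∉ S a)
    (hc : S c = insert v (S a)) : largestAvoiding S v ∈ MsetDiff a c := by
  have hvc : v ∈ S c := hc ▸ Set.mem_insert _ _
  exact ⟨hS.meetIrred_largestAvoiding ((hS.le_iff _ _).1 le_top hvc),
    hS.le_largestAvoiding.2 hv, fun h => hS.le_largestAvoiding.1 h hvc⟩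

end IsAntimatroidRep

end FeasibleSets

section Representation

variable {V : Type*} {E : V → V → ℕ} {O : V → ℕ} {L : Type*}

/-- The vertices fired in order to reach the configuration `f a` from `O`. -/
def firedSet (f : L ≃ {c : V → ℕ // Reaches E O c}) (a : L) : Set V :=
  {v | ∃ l : List V, ValidSeq E O l ∧ fireList E O l = (f a).val ∧ v ∈ l}

theorem ReachesUFP.firedSet_eq (hUFP : ReachesUFP E O)
    {f : L ≃ {c : V → ℕ // Reaches E O c}} {a : L} {l : List V} (hl : ValidSeq E O l)
    (ha : fireList E O l = (f a).val) : firedSet f a = {v | v ∈ l} := by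
  ext v
  constructor
  · rintro ⟨l', hl', ha', hv⟩
    exact (hUFP.perm hl' hl (ha'.trans ha.symm)).subset hv
  · exact fun hv => ⟨l, hl, ha, hv⟩

theorem SimpleCFG.firedSet_of_fireStep (hUFP : ReachesUFP E O) (hSimple : SimpleCFG E O)
    {f : L ≃ {c : V → ℕ // Reaches E O c}} {a b : L} {v : V}
    (h : FireStep E (f a).val v (f b).val) :
    v ∉ firedSet f a ∧ firedSet f b = insert v (firedSet f a) := by
  obtain ⟨l, hl, ha⟩ := (f a).2
  have hlv : ValidSeq E O (l ++ [v]) :=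
    validSeq_append.2 ⟨hl, by rw [ha]; exact ⟨h.1, trivial⟩⟩
  have hb : fireList E O (l ++ [v]) = (f b).val := by
    rw [fireList_append, ha]
    exact h.2
  rw [hUFP.firedSet_eq hl ha, hUFP.firedSet_eq hlv hb]
  refine ⟨fun hv => ?_, ?_⟩
  · exact (List.nodup_append.1 (hSimple.nodup hUFP hlv)).2.2 v hv v (by simp) rfl
  · ext w
    simp [or_comm]

variable [Lattice L] [BoundedOrder L]

theorem SimpleCFG.isAntimatroidRep_firedSet (hUFP : ReachesUFP E O)
    (hSimple : SimpleCFG E O) {f : L ≃ {c : V → ℕ // Reaches E O c}}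
    (hf : ∀ a b : L, a ≤ b ↔ Reaches E (f a).val (f b).val) :
    IsAntimatroidRep (firedSet f) := by
  have hle : ∀ a b, a ≤ b ↔ firedSet f a ⊆ firedSet f b := by
    intro a b
    obtain ⟨la, hla, ha⟩ := (f a).2
    obtain ⟨lb, hlb, hb⟩ := (f b).2
    refine ⟨fun h => ?_, fun h => ?_⟩
    · obtain ⟨s, hs, hsb⟩ := (hf a b).1 h
      have hv : ValidSeq E O (la ++ s) := validSeq_append.2 ⟨hla, ha ▸ hs⟩
      rw [hUFP.firedSet_eq hla ha,
        hUFP.firedSet_eq hv (by rw [fireList_append, ha, hsb])]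
      exact fun v hv => List.mem_append_left _ hv
    · rw [hUFP.firedSet_eq hla ha, hUFP.firedSet_eq hlb hb] at h
      rw [hf, ← ha, ← hb]
      exact hSimple.reaches_of_subset hUFP hla hlb h
  refine ⟨hle, ?_, fun a b => ?_, fun a b hab => ?_⟩
  · have hO : Reaches E O O := ⟨[], trivial, rfl⟩
    have h := (hle ⊥ (f.symm ⟨O, hO⟩)).1 bot_le
    rw [hUFP.firedSet_eq (a := f.symm ⟨O, hO⟩) (l := []) trivial (by simp [fireList])] at h
    simpa using h
  · obtain ⟨la, hla, ha⟩ := (f a).2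
    obtain ⟨lb, hlb, hb⟩ := (f b).2
    have hv : ValidSeq E O (la ++ lb.diff la) := validSeq_append.2 ⟨hla, hla.diff hlb⟩
    let c : L := f.symm ⟨_, _, hv, rfl⟩
    have hc : firedSet f c = firedSet f a ∪ firedSet f b := by
      rw [hUFP.firedSet_eq (a := c) hv (by simp [c]), hUFP.firedSet_eq hla ha,
        hUFP.firedSet_eq hlb hb]
      ext v
      simp only [List.mem_append, (hSimple.nodup hUFP hlb).mem_sdiff_iff, Set.mem_ofPred_eq,
        Set.mem_union]
      tauto
    refine Set.Subset.antisymm ?_ (Set.union_subset ((hle _ _).1 le_sup_left)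
      ((hle _ _).1 le_sup_right))
    rw [← hc, ← hle]
    exact sup_le ((hle _ _).2 (hc ▸ Set.subset_union_left))
      ((hle _ _).2 (hc ▸ Set.subset_union_right))
  · obtain ⟨s, hs, hsb⟩ := (hf a b).1 hab.le
    cases s with
    | nil => exact absurd (f.injective (Subtype.ext hsb)) hab.ne
    | cons v s =>
      obtain ⟨l, hl, ha⟩ := (f a).2
      have hr : Reaches E O (fire E (f a).val v) :=
        ⟨l ++ [v], validSeq_append.2 ⟨hl, by rw [ha]; exact ⟨hs.1, trivial⟩⟩, by
          rw [fireList_append, ha]; rfl⟩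
      have h := hSimple.firedSet_of_fireStep hUFP (f := f) (a := a)
        (b := f.symm ⟨_, hr⟩) (v := v) ⟨hs.1, by simp⟩
      refine ⟨v, h.1, _, ?_, h.2⟩
      rw [hf]
      exact ⟨s, by simpa using hs.2, by simpa [fireList] using hsb⟩

theorem ReachesUFP.firedSet_top (hUFP : ReachesUFP E O)
    {f : L ≃ {c : V → ℕ // Reaches E O c}}
    (hf : ∀ a b : L, a ≤ b ↔ Reaches E (f a).val (f b).val) :
    firedSet f ⊤ =
      {v : V | ∃ l : List V, ValidSeq E O l ∧ FixedPt E (fireList E O l) ∧ v ∈ l} := by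
  have hfix : ∀ l : List V, ValidSeq E O l →
      (FixedPt E (fireList E O l) ↔ fireList E O l = (f ⊤).val) := by
    have hpt : ∀ c (hc : Reaches E O c), FixedPt E c → c = (f ⊤).val := by
      intro c hc hfix
      obtain ⟨s, hs, h⟩ := (hf (f.symm ⟨c, hc⟩) ⊤).1 le_top
      simp only [Equiv.apply_symm_apply] at hs h
      rwa [hfix.eq_nil hs] at h
    intro l hl
    refine ⟨hpt _ ⟨l, hl, rfl⟩, fun h => ?_⟩
    obtain ⟨fp, hfp, hfpfix, -⟩ := hUFP
    rwa [h, ← hpt fp hfp hfpfix]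
  ext v
  constructor
  · rintro ⟨l, hl, h, hv⟩
    exact ⟨l, hl, (hfix l hl).2 h, hv⟩
  · rintro ⟨l, hl, h, hv⟩
    exact ⟨l, hl, (hfix l hl).1 h, hv⟩

end Representation

/-- for a simple CFG reaching a unique fixed point generating the finite
ULD lattice `L`, the map `κ` sending a meet-irreducible `m` to the vertex fired in any
cover `c ⋖ c'` with `𝔪(c,c') = m` is well-defined and is a bijection from the
meet-irreducibles onto the set `𝒱` of fired vertices. -/
theorem stmt1 {V : Type*} [Finite V] (E : V → V → ℕ) (O : V → ℕ)
    (hUFP : ReachesUFP E O) (hSimple : SimpleCFG E O)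
    {L : Type*} [Lattice L] [Fintype L] [BoundedOrder L] (hULD : IsULD L)
    (f : L ≃ {c : V → ℕ // Reaches E O c})
    (hf : ∀ a b : L, a ≤ b ↔ Reaches E (f a).val (f b).val) :
    ∃ κ : {m : L // MeetIrred m} → V,
      (∀ (m : {m : L // MeetIrred m}) (c c' : L) (v : V),
        c ⋖ c' → MsetDiff c c' = {m.val} → FireStep E (f c).val v (f c').val →
        κ m = v) ∧
      Function.Injective κ ∧
      Set.range κ =
        {v : V | ∃ l : List V, ValidSeq E O l ∧ FixedPt E (fireList E O l) ∧ v ∈ l} := by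
  have hS := hSimple.isAntimatroidRep_firedSet hUFP hf
  choose κ hmem hκ using fun m : {m : L // MeetIrred m} => hS.exists_eq_largestAvoiding m.2
  have hinv : ∀ m v, v ∈ firedSet f ⊤ → largestAvoiding (firedSet f) v = m.val → κ m = v :=
    fun m v hv h => hS.injOn_largestAvoiding (hmem m) hv ((hκ m).trans h.symm)
  refine ⟨κ, fun m c c' v _ hm hstep => ?_, fun m₁ m₂ h => ?_, ?_⟩
  · obtain ⟨hv, hc'⟩ := hSimple.firedSet_of_fireStep hUFP hstep
    refine hinv m v ((hS.le_iff c' ⊤).1 le_top (hc' ▸ Set.mem_insert _ _)) ?_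
    have h := hS.largestAvoiding_mem_msetDiff hv hc'
    rwa [hm] at h
  · rw [Subtype.ext_iff, ← hκ m₁, ← hκ m₂, h]
  · rw [← hUFP.firedSet_top hf]
    refine Set.Subset.antisymm (Set.range_subset_iff.2 hmem) fun v hv => ?_
    exact ⟨⟨_, hS.meetIrred_largestAvoiding hv⟩, hinv _ v hv rfl⟩
end

section
/- If L is a finite distributive lattice, then for every meet-irreducible m of L the set 𝔘_m has exactly one element. -/
open Classical

/-- The unique upper cover of a meet-irreducible lies below every strictly larger element. -/
theorem MeetIrred.exists_covBy_le {L : Type*} [Lattice L] [Finite L] {m : L} (hm : MeetIrred m) :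
    ∃ c, m ⋖ c ∧ ∀ x, m < x → c ≤ x := by
  obtain ⟨c, hc, hu⟩ := hm
  refine ⟨c, hc, fun x hx => ?_⟩
  obtain ⟨d, hd, hdx⟩ := exists_covBy_le_of_lt hx
  exact hu d hd ▸ hdx

/-- In a finite distributive lattice meet-irreducible elements are prime. -/
theorem MeetIrred.le_or_le_of_inf_le {L : Type*} [DistribLattice L] [Finite L] {m a b : L}
    (hm : MeetIrred m) (h : a ⊓ b ≤ m) : a ≤ m ∨ b ≤ m := by
  obtain ⟨c, hc, hle⟩ := hm.exists_covBy_le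
  by_contra! hab
  have hca : c ≤ m ⊔ a := hle _ (left_lt_sup.2 hab.1)
  have hcb : c ≤ m ⊔ b := hle _ (left_lt_sup.2 hab.2)
  have hcm : c ≤ m := by
    calc c ≤ (m ⊔ a) ⊓ (m ⊔ b) := le_inf hca hcb
      _ = m ⊔ a ⊓ b := sup_inf_left m a b |>.symm
      _ ≤ m := sup_le le_rfl h
  exact hc.lt.not_ge hcm

/-- Meet-irreducible elements separate the points of a finite lattice. -/
theorem MsetDiff_nonempty {L : Type*} [Lattice L] [Finite L] {a b : L} (h : ¬ b ≤ a) :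
    (MsetDiff a b).Nonempty := by
  obtain ⟨m, ham, hmax⟩ :=
    (Set.toFinite {x : L | ¬ b ≤ x}).exists_le_maximal (a := a) h
  have hlt : ∀ x, m < x → m ⊔ b ≤ x := fun x hx =>
    sup_le hx.le (not_not.1 (hmax.not_prop_of_gt hx))
  have hm : m < m ⊔ b := left_lt_sup.2 hmax.prop
  refine ⟨m, ⟨m ⊔ b, ⟨hm, fun x hx hxb => hxb.not_ge (hlt x hx)⟩, fun y hy => ?_⟩, ham, hmax.prop⟩
  exact ((hlt y hy.lt).eq_of_not_lt (hy.2 hm)).symm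

theorem MsetDiff_eq_singleton_of_covBy {L : Type*} [Lattice L] [Finite L] {m c : L}
    (hm : MeetIrred m) (hc : m ⋖ c) : MsetDiff m c = {m} := by
  ext x
  constructor
  · rintro ⟨-, hmx, hcx⟩
    obtain ⟨d, hd, hle⟩ := hm.exists_covBy_le
    obtain rfl := hm.unique hc hd
    by_contra hne
    exact hcx (hle x (lt_of_le_of_ne hmx (Ne.symm hne)))
  · rintro rfl
    exact ⟨hm, le_rfl, hc.lt.not_ge⟩

/-- If exactly one meet-irreducible separates `x ≤ y`, then `y` covers `x`. -/
theorem covBy_of_MsetDiff_eq_singleton {L : Type*} [Lattice L] [Finite L] {m x y : L}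
    (hxy : x ≤ y) (h : MsetDiff x y = {m}) : x ⋖ y := by
  have hmem : m ∈ MsetDiff x y := h ▸ rfl
  refine ⟨lt_of_le_not_ge hxy fun hyx => hmem.2.2 (hyx.trans hmem.2.1), fun w hxw hwy => ?_⟩
  obtain ⟨p, hp, hxp, hwp⟩ := MsetDiff_nonempty hxw.not_ge
  obtain ⟨q, hq, hwq, hyq⟩ := MsetDiff_nonempty hwy.not_ge
  have hpm : p ∈ MsetDiff x y := ⟨hp, hxp, fun hyp => hwp (hwy.le.trans hyp)⟩
  have hqm : q ∈ MsetDiff x y := ⟨hq, hxw.le.trans hwq, hyq⟩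
  rw [h, Set.mem_singleton_iff] at hpm hqm
  subst hpm hqm
  exact hwp hwq

theorem MsetDiff_inf_eq_singleton {L : Type*} [DistribLattice L] [Finite L] {m x₁ y₁ x₂ y₂ : L}
    (h₁ : MsetDiff x₁ y₁ = {m}) (h₂ : MsetDiff x₂ y₂ = {m}) :
    MsetDiff (x₁ ⊓ x₂) (y₁ ⊓ y₂) = {m} := by
  have hm₁ : m ∈ MsetDiff x₁ y₁ := h₁ ▸ rfl
  have hm₂ : m ∈ MsetDiff x₂ y₂ := h₂ ▸ rfl
  ext p
  constructor
  · rintro ⟨hp, hxp, hyp⟩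
    rcases hp.le_or_le_of_inf_le hxp with hx | hx
    · exact h₁ ▸ ⟨hp, hx, fun hy => hyp (inf_le_left.trans hy)⟩
    · exact h₂ ▸ ⟨hp, hx, fun hy => hyp (inf_le_right.trans hy)⟩
  · rintro rfl
    refine ⟨hm₁.1, inf_le_left.trans hm₁.2.1, fun hy => ?_⟩
    exact (hm₁.1.le_or_le_of_inf_le hy).elim hm₁.2.2 hm₂.2.2

/-- in a finite distributive lattice, for every meet-irreducible `m`
the set `𝔘_m` has exactly one element. -/
theorem stmt6 {L : Type*} [DistribLattice L] [Fintype L] [BoundedOrder L]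
    (m : L) (hm : MeetIrred m) :
    ∃! x : L, x ∈ Uset m := by
  obtain ⟨c, hc, -⟩ := id hm
  obtain ⟨x, -, hx⟩ :=
    (Set.toFinite {z : L | ∃ y, z ⋖ y ∧ MsetDiff z y = {m}}).exists_le_minimal
      (a := m) ⟨c, hc, MsetDiff_eq_singleton_of_covBy hm hc⟩
  refine ⟨x, hx, fun z hz => ?_⟩
  rw [Uset, Set.mem_ofPred_eq] at hz
  obtain ⟨y, hxy, hy⟩ := hx.prop
  obtain ⟨w, hzw, hw⟩ := hz.prop
  have hinf := MsetDiff_inf_eq_singleton hy hw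
  have hP : ∃ v, x ⊓ z ⋖ v ∧ MsetDiff (x ⊓ z) v = {m} :=
    ⟨y ⊓ w, covBy_of_MsetDiff_eq_singleton (inf_le_inf hxy.le hzw.le) hinf, hinf⟩
  exact (hz.eq_of_le hP inf_le_right).symm.trans (hx.eq_of_le hP inf_le_left)
end

section
/- If L is a finite distributive lattice, then for every meet-irreducible m of L the system E(m) has a non-negative integer solution. -/
open Classical

section MeetIrreducible

/-- In a finite lattice, the meet-irreducibles separate `x` from every element not below it. -/
lemma exists_meetIrred_of_not_le {L : Type*} [Lattice L] [Finite L] {b x : L} (h : ¬ b ≤ x) :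
    ∃ n, MeetIrred n ∧ x ≤ n ∧ ¬ b ≤ n := by
  obtain ⟨n, hxn, hn⟩ := (Set.toFinite {z : L | ¬ b ≤ z}).exists_le_maximal h
  have above : ∀ d, n < d → n ⊔ b ≤ d := fun d hd =>
    sup_le hd.le (by_contra fun hb => hn.not_gt hb hd)
  have lt : n < n ⊔ b := left_lt_sup.2 hn.prop
  refine ⟨n, ⟨n ⊔ b, ⟨lt, fun d hd hd' => (above d hd).not_gt hd'⟩, fun c hc => ?_⟩,
    hxn, hn.prop⟩
  exact ((above c hc.lt).eq_of_not_lt fun hlt => hc.2 lt hlt).symm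

/-- A meet-irreducible of a finite distributive lattice is meet-prime. -/
lemma MeetIrred.le_or_le {L : Type*} [DistribLattice L] [Finite L] {n a b : L}
    (hn : MeetIrred n) (h : a ⊓ b ≤ n) : a ≤ n ∨ b ≤ n := by
  obtain ⟨c, hc, huniq⟩ := hn
  have key : ∀ d, ¬ d ≤ n → c ≤ n ⊔ d := fun d hd => by
    obtain ⟨c', hc', hle⟩ := exists_covBy_le_of_lt (left_lt_sup.2 hd)
    exact huniq c' hc' ▸ hle
  by_contra! hab
  have hle : c ≤ n ⊔ a ⊓ b := sup_inf_left n a b ▸ le_inf (key a hab.1) (key b hab.2)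
  exact hc.lt.not_ge (hle.trans (sup_le le_rfl h))

/-- In a finite distributive lattice, the lower ends of the covers labelled by `m` are closed
under meets. -/
lemma exists_covBy_msetDiff_inf {L : Type*} [DistribLattice L] [Finite L] {m x x' : L}
    (h : ∃ y, x ⋖ y ∧ MsetDiff x y = {m}) (h' : ∃ y, x' ⋖ y ∧ MsetDiff x' y = {m}) :
    ∃ y, x ⊓ x' ⋖ y ∧ MsetDiff (x ⊓ x') y = {m} := by
  obtain ⟨y, hxy, hy⟩ := h
  obtain ⟨y', hxy', hy'⟩ := h'
  obtain ⟨hm, hxm, hym⟩ : m ∈ MsetDiff x y := hy ▸ rfl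
  obtain ⟨-, -, hym'⟩ : m ∈ MsetDiff x' y' := hy' ▸ rfl
  have hlt : x ⊓ x' < y ⊓ y' := lt_of_le_not_ge (inf_le_inf hxy.le hxy'.le) fun hle =>
    (hm.le_or_le (hle.trans (inf_le_left.trans hxm))).elim hym hym'
  obtain ⟨c, hc, hcle⟩ := exists_covBy_le_of_lt hlt
  have hsub : ∀ n ∈ MsetDiff (x ⊓ x') c, n = m := by
    rintro n ⟨hn, hxn, hcn⟩
    rcases hn.le_or_le hxn with hx | hx
    · exact hy.subset ⟨hn, hx, fun hle => hcn (hcle.trans (inf_le_left.trans hle))⟩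
    · exact hy'.subset ⟨hn, hx, fun hle => hcn (hcle.trans (inf_le_right.trans hle))⟩
  exact ⟨c, hc, Set.eq_singleton_iff_nonempty_unique_mem.2
    ⟨exists_meetIrred_of_not_le hc.lt.not_ge, hsub⟩⟩

/-- In a finite distributive lattice, `𝔘_m` has at most one element. -/
lemma Uset_subsingleton {L : Type*} [DistribLattice L] [Finite L] (m : L) :
    (Uset m).Subsingleton := by
  intro x hx x' hx'
  have h := exists_covBy_msetDiff_inf hx.1 hx'.1
  exact le_antisymm ((hx.2 h inf_le_left).trans inf_le_right)
    ((hx'.2 h inf_le_right).trans inf_le_left)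

end MeetIrreducible

/-- in a finite distributive lattice, for every meet-irreducible `m`
the system `E(m)` has a non-negative integer solution. -/
theorem stmt7 {L : Type*} [DistribLattice L] [Fintype L] [BoundedOrder L]
    (m : L) (hm : MeetIrred m) :
    HasSolE m := by
  rcases (Uset_subsingleton m).eq_empty_or_singleton with h | ⟨a, ha⟩
  · exact ⟨1, 0, fun _ => le_rfl, fun _ => by simp [h]⟩
  by_cases hbot : Uset m = {⊥}
  · exact ⟨1, 0, fun _ => le_rfl, fun h => absurd hbot h⟩
  have hsum : ∀ b : L, ∑ᶠ x ∈ MnotAbove b, (if a ≤ x then 0 else 1) =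
      ((MnotAbove b).toFinset.filter fun x => ¬ a ≤ x).card := fun b => by
    simp [finsum_mem_eq_toFinset_sum, Finset.card_filter, ite_not]
  refine ⟨∑ᶠ x ∈ MnotAbove a, (if a ≤ x then 0 else 1), fun x => if a ≤ x then 0 else 1,
    fun h => absurd h hbot, fun _ => ⟨fun l hl => ?_, fun b hb => ?_⟩⟩
  · obtain ⟨n, hn, hln, han⟩ := exists_meetIrred_of_not_le (hl.1 a (ha ▸ rfl))
    rw [hsum, hsum]
    refine Finset.card_lt_card ((Finset.ssubset_iff_of_subset fun x hx => ?_).2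
      ⟨n, ?_, ?_⟩)
    · rw [Finset.mem_filter, Set.mem_toFinset] at hx ⊢
      exact ⟨⟨hx.1.1, hx.2⟩, hx.2⟩
    · exact Finset.mem_filter.2 ⟨Set.mem_toFinset.2 ⟨hn, han⟩, han⟩
    · exact fun h => (Set.mem_toFinset.1 (Finset.mem_filter.1 h).1).2 hln
  · obtain rfl : b = a := by simpa [ha] using hb
    exact le_rfl
end
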